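/- Let x = (S, Λ) be a combinatorial k-parameter with S a set of ordinals, let F be a regressive function on x which is finitary or simple, let b : Λ × ℕ → ℤ, and for each η̄ ∈ Λ and n ∈ ℕ let z_{η̄,n} be an element of the free abelian group on the generating set which is a ℤ-linear combination of generators x_{ν̄} with ν̄ ∈ F(η̄) ∖ Λ and generators y_{ν̄,n} with ν̄ ∈ F(η̄) ∩ Λ satisfying ν̄↾⟨m,n⟩ ∈ F(η̄) for all m ≤ k. Let G be the abelian group presented by generators {x_ν : ν ∈ Λ_0 ∪ … ∪ Λ_k} ∪ {y_{η̄,n} : η̄ ∈ Λ, n ∈ ℕ} and relations n!·y_{η̄,n+1} = y_{η̄,n} + b(η̄,n)·z_{η̄,n} + Σ_{m≤k} x_{η̄↾⟨m,n⟩} for each η̄ ∈ Λ and n ∈ ℕ. Then G is ℵ_{k+1}-free. -/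

import Mathlib

open Cardinal

namespace Sh883

/-- A "restricted tuple": the result of replacing the `m`-th coordinate of a `(k+1)`-tuple
of functions `ℕ → S` by a finite sequence (list) of elements of `S`, keeping the other
coordinates. -/
structure Res (k : ℕ) (S : Type u) where
  m : Fin (k + 1)
  seq : List S
  rest : (l : Fin (k + 1)) → l ≠ m → ℕ → S

/-- `η̄↾⟨m,n⟩` : replace the `m`-th coordinate of `η̄` by the finite sequence
`⟨η_m(0), …, η_m(n-1)⟩`. -/
def restrictAt {k : ℕ} {S : Type u} (η : Fin (k + 1) → ℕ → S) (m : Fin (k + 1)) (n : ℕ) :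
    Res k S :=
  ⟨m, List.ofFn fun i : Fin n => η m i, fun l _ => η l⟩

/-- `Λ_m = {η̄↾⟨m,n⟩ : η̄ ∈ Λ, n ∈ ℕ}`. -/
def LambdaResAt {k : ℕ} {S : Type u} (Λ : Set (Fin (k + 1) → ℕ → S)) (m : Fin (k + 1)) :
    Set (Res k S) :=
  {ν | ∃ η ∈ Λ, ∃ n : ℕ, ν = restrictAt η m n}

/-- `Λ_0 ∪ … ∪ Λ_k`. -/
def LambdaRes {k : ℕ} {S : Type u} (Λ : Set (Fin (k + 1) → ℕ → S)) : Set (Res k S) :=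
  ⋃ m, LambdaResAt Λ m

/-- Elements of `Λ ∪ Λ_0 ∪ … ∪ Λ_k`: either a full tuple or a restricted tuple.
Here `S` is a set of ordinals. -/
abbrev FullOrRes (k : ℕ) (Sset : Set Ordinal.{u}) : Type (u + 1) :=
  (Fin (k + 1) → ℕ → ↥Sset) ⊕ Res k ↥Sset

/-- The set of ordinal values of the `l`-th coordinate of a (full or restricted) tuple. -/
def coordVals {k : ℕ} {Sset : Set Ordinal.{u}} (w : FullOrRes k Sset) (l : Fin (k + 1)) :
    Set Ordinal.{u} :=
  match w with
  | Sum.inl ν => Set.range fun i : ℕ => (ν l i : Ordinal)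
  | Sum.inr ρ =>
      if h : l = ρ.m then {o : Ordinal | ∃ s ∈ ρ.seq, (s : Ordinal) = o}
      else Set.range fun i : ℕ => (ρ.rest l h i : Ordinal)

/-- `F` is a regressive function on the combinatorial `k`-parameter `(Sset, Λ)` (with
`Sset` a set of ordinals): `F` assigns to each `η̄ ∈ Λ` a countable subset of
`Λ ∪ Λ_0 ∪ … ∪ Λ_k` such that for all `ℓ ≤ k`,
`sup(range η_ℓ) > sup(⋃ {ℓ-th coordinate values of members of F(η̄)})`. -/
def Regressive {k : ℕ} {Sset : Set Ordinal.{u}} (Λ : Set (Fin (k + 1) → ℕ → ↥Sset))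
    (F : ↥Λ → Set (FullOrRes k Sset)) : Prop :=
  (∀ η : ↥Λ, (F η).Countable) ∧
    (∀ η : ↥Λ, ∀ w ∈ F η, Sum.elim (· ∈ Λ) (· ∈ LambdaRes Λ) w) ∧
    ∀ (η : ↥Λ) (l : Fin (k + 1)),
      sSup (⋃ w ∈ F η, coordVals w l) <
        ⨆ i : ℕ, (((η : Fin (k + 1) → ℕ → ↥Sset) l i : Ordinal))

/-- `F` is finitary: each `F(η̄)` is finite. -/
def Finitary {k : ℕ} {Sset : Set Ordinal.{u}} {Λ : Set (Fin (k + 1) → ℕ → ↥Sset)}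
    (F : ↥Λ → Set (FullOrRes k Sset)) : Prop :=
  ∀ η : ↥Λ, (F η).Finite

/-- `F` is simple: `F(η̄)` depends only on `η_k(0)`. -/
def Simple {k : ℕ} {Sset : Set Ordinal.{u}} {Λ : Set (Fin (k + 1) → ℕ → ↥Sset)}
    (F : ↥Λ → Set (FullOrRes k Sset)) : Prop :=
  ∀ η η' : ↥Λ,
    (η : Fin (k + 1) → ℕ → ↥Sset) (Fin.last k) 0 =
      (η' : Fin (k + 1) → ℕ → ↥Sset) (Fin.last k) 0 → F η = F η'

/-- `Λ'` is free for `(x, F)`: there are an enumeration `⟨η̄^α : α < α*⟩` of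
`Λ' ∪ ⋃{F(η̄) : η̄ ∈ Λ'}` and indices `⟨ℓ_α : α < α*⟩` such that (i) if `η̄^α ∈ Λ'` then
`F(η̄^α) ⊆ {η̄^β : β < α} ∪ {η̄^β↾⟨m,n⟩ : β < α, m ≤ k, n ∈ ℕ}`, and (ii) if
`η̄^α ∈ Λ'` then for some `n`,
`η̄^α↾⟨ℓ_α,n⟩ ∉ {η̄^β↾⟨ℓ_α,n⟩ : β < α, η̄^β ∈ Λ'} ∪ {η̄^β : β < α}`. -/
def FreeFor {k : ℕ} {Sset : Set Ordinal.{u}} (Λ : Set (Fin (k + 1) → ℕ → ↥Sset))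
    (F : ↥Λ → Set (FullOrRes k Sset)) (Λ' : Set (Fin (k + 1) → ℕ → ↥Sset)) : Prop :=
  ∃ (o : Ordinal.{u + 1}) (e : Set.Iio o → FullOrRes k Sset) (L : Set.Iio o → Fin (k + 1)),
    Function.Injective e ∧
    (Set.range e =
      Sum.inl '' Λ' ∪ ⋃ (η : ↥Λ) (_ : (η : Fin (k + 1) → ℕ → ↥Sset) ∈ Λ'), F η) ∧
    (∀ (α : Set.Iio o) (η : ↥Λ),
      e α = Sum.inl (η : Fin (k + 1) → ℕ → ↥Sset) → (η : Fin (k + 1) → ℕ → ↥Sset) ∈ Λ' →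
      F η ⊆ {w | ∃ β : Set.Iio o, (β : Ordinal) < (α : Ordinal) ∧
        (w = e β ∨ ∃ (ν : Fin (k + 1) → ℕ → ↥Sset) (m : Fin (k + 1)) (n : ℕ),
          e β = Sum.inl ν ∧ w = Sum.inr (restrictAt ν m n))}) ∧
    ∀ (α : Set.Iio o) (η : ↥Λ),
      e α = Sum.inl (η : Fin (k + 1) → ℕ → ↥Sset) → (η : Fin (k + 1) → ℕ → ↥Sset) ∈ Λ' →
      ∃ n : ℕ, ∀ β : Set.Iio o, (β : Ordinal) < (α : Ordinal) →
        e β ≠ Sum.inr (restrictAt (η : Fin (k + 1) → ℕ → ↥Sset) (L α) n) ∧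
        ∀ ν : Fin (k + 1) → ℕ → ↥Sset, e β = Sum.inl ν → ν ∈ Λ' →
          restrictAt (η : Fin (k + 1) → ℕ → ↥Sset) (L α) n ≠ restrictAt ν (L α) n

end Sh883

namespace Sh883

/-- The generators of the group of Definition k.21: `x_ν` for `ν ∈ Λ_0 ∪ … ∪ Λ_k` and
`y_{η̄,n}` for `η̄ ∈ Λ`, `n ∈ ℕ` (no `z` generator). -/
inductive Gen2 (k : ℕ) (Sset : Set Ordinal.{u}) (Λ : Set (Fin (k + 1) → ℕ → ↥Sset)) :
    Type (u + 1) where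
  | X : ↥(LambdaRes Λ) → Gen2 k Sset Λ
  | Y : ↥Λ → ℕ → Gen2 k Sset Λ

/-- `η̄↾⟨m,n⟩` as an element of `Λ_0 ∪ … ∪ Λ_k`, for `η̄ ∈ Λ`. -/
def resMem {k : ℕ} {S : Type v} {Λ : Set (Fin (k + 1) → ℕ → S)} (η : ↥Λ) (m : Fin (k + 1))
    (n : ℕ) : ↥(LambdaRes Λ) :=
  ⟨restrictAt (η : Fin (k + 1) → ℕ → S) m n, Set.mem_iUnion.2 ⟨m, (η : _), η.2, n, rfl⟩⟩

/-- The subgroup of the free abelian group on the generators consisting of the ℤ-linear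
combinations of the generators `x_{ν̄}` with `ν̄ ∈ F(η̄) ∖ Λ` and `y_{ν̄,n}` with
`ν̄ ∈ F(η̄) ∩ Λ` satisfying `ν̄↾⟨m,n⟩ ∈ F(η̄)` for all `m ≤ k`. -/
def zSpan {k : ℕ} {Sset : Set Ordinal.{u}} {Λ : Set (Fin (k + 1) → ℕ → ↥Sset)}
    (F : ↥Λ → Set (FullOrRes k Sset)) (η : ↥Λ) (n : ℕ) :
    AddSubgroup (FreeAbelianGroup (Gen2 k Sset Λ)) :=
  AddSubgroup.closure
    ({g | ∃ ρ : ↥(LambdaRes Λ), Sum.inr (ρ : Res k ↥Sset) ∈ F η ∧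
        g = FreeAbelianGroup.of (Gen2.X ρ)}
      ∪ {g | ∃ ν : ↥Λ, Sum.inl ((ν : Fin (k + 1) → ℕ → ↥Sset)) ∈ F η ∧
          (∀ m : Fin (k + 1),
            Sum.inr (restrictAt (ν : Fin (k + 1) → ℕ → ↥Sset) m n) ∈ F η) ∧
          g = FreeAbelianGroup.of (Gen2.Y ν n)})

/-- The subgroup of relations
`n!·y_{η̄,n+1} − y_{η̄,n} − b(η̄,n)·z_{η̄,n} − Σ_{m≤k} x_{η̄↾⟨m,n⟩}`. -/
def relSub2 {k : ℕ} {Sset : Set Ordinal.{u}} {Λ : Set (Fin (k + 1) → ℕ → ↥Sset)}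
    (b : ↥Λ → ℕ → ℤ) (z : ↥Λ → ℕ → FreeAbelianGroup (Gen2 k Sset Λ)) :
    AddSubgroup (FreeAbelianGroup (Gen2 k Sset Λ)) :=
  AddSubgroup.closure {g | ∃ (η : ↥Λ) (n : ℕ),
    g = (n.factorial : ℤ) • FreeAbelianGroup.of (Gen2.Y η (n + 1))
        - FreeAbelianGroup.of (Gen2.Y η n)
        - b η n • z η n
        - ∑ m : Fin (k + 1), FreeAbelianGroup.of (Gen2.X (resMem η m n))}

end Sh883

namespace Sh883
universe w

theorem free_sub_finsupp {ι : Type*} (N : Submodule ℤ (ι →₀ ℤ)) : Module.Free ℤ N := by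
  classical
  obtain ⟨_, _⟩ := exists_wellFoundedLT ι
  -- ideals of leading coefficients
  let K : ι → Submodule ℤ (ι →₀ ℤ) := fun i => N ⊓ Finsupp.supported ℤ ℤ (Set.Iic i)
  let I : ι → Ideal ℤ := fun i => (K i).map (Finsupp.lapply i)
  let d : ι → ℤ := fun i => Submodule.IsPrincipal.generator (I i)
  have hd : ∀ i, ∃ f ∈ K i, f i = d i := fun i => by
    have := Submodule.IsPrincipal.generator_mem (I i)
    obtain ⟨f, hf, h⟩ := Submodule.mem_map.1 this
    exact ⟨f, hf, h⟩
  choose f hfK hfd using hd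
  have hsupp : ∀ i, ∀ g ∈ K i, ∀ j, i < j → g j = 0 := by
    intro i g hg j hij
    by_contra h
    have := (Finsupp.mem_supported ℤ g).1 hg.2 (Finsupp.mem_support_iff.2 h)
    exact absurd hij (not_lt.2 this)
  let J := {i : ι // d i ≠ 0}
  let v : J → N := fun j => ⟨f j.1, (hfK j.1).1⟩
  have hli : LinearIndependent ℤ v := by
    rw [linearIndependent_iff]
    intro l hl
    by_contra hne
    have hs : l.support.Nonempty := Finsupp.support_nonempty_iff.2 hne
    obtain ⟨j, hj, hmax⟩ := l.support.exists_max_image (fun j : J => j.1) hs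
    have h1 : (Finsupp.linearCombination ℤ v l : ι →₀ ℤ) j.1 = 0 := by rw [hl]; rfl
    rw [Finsupp.linearCombination_apply, Finsupp.sum, Submodule.coe_sum, Finsupp.finsetSum_apply,
      Finset.sum_eq_single j] at h1
    · have h2 : l j * f j.1 j.1 = 0 := h1
      rw [hfd] at h2
      rcases mul_eq_zero.1 h2 with h | h
      · exact Finsupp.mem_support_iff.1 hj h
      · exact j.2 h
    · intro b hb hbj
      have hlt : b.1 < j.1 := lt_of_le_of_ne (hmax b hb) (fun h => hbj (Subtype.ext h))
      change l b * f b.1 j.1 = 0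
      rw [hsupp b.1 _ (hfK _) _ hlt, mul_zero]
    · intro h; exact absurd hj h
  have key : ∀ i, ∀ g, ∀ hg : g ∈ K i, (⟨g, hg.1⟩ : N) ∈ Submodule.span ℤ (Set.range v) := by
    intro i
    induction i using WellFoundedLT.induction with
    | ind i ih =>
      -- elements supported strictly below
      have low : ∀ g, ∀ hg : g ∈ K i, g i = 0 → (⟨g, hg.1⟩ : N) ∈ Submodule.span ℤ (Set.range v) := by
        intro g hg h0
        by_cases hz : g = 0
        · have : (⟨g, hg.1⟩ : N) = 0 := Subtype.ext hz
          rw [this]; exact Submodule.zero_mem _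
        · obtain ⟨j, hj, hmax⟩ := g.support.exists_max_image id (Finsupp.support_nonempty_iff.2 hz)
          have hji : j < i := by
            rcases lt_or_ge i j with h | h
            · exact absurd (hsupp i g hg j h) (Finsupp.mem_support_iff.1 hj)
            · exact lt_of_le_of_ne h (fun h' => Finsupp.mem_support_iff.1 hj (h' ▸ h0))
          exact ih j hji g ⟨hg.1, (Finsupp.mem_supported ℤ g).2 (fun x hx => hmax x hx)⟩
      intro g hg
      have hgi : g i ∈ I i := Submodule.mem_map.2 ⟨g, hg, rfl⟩
      obtain ⟨c, hc⟩ := (Submodule.IsPrincipal.mem_iff_eq_smul_generator (I i)).1 hgi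
      by_cases hdi : d i = 0
      · refine low g hg ?_
        rw [hc]; change c * d i = 0; rw [hdi, mul_zero]
      · have hg' : g - c • f i ∈ K i := (K i).sub_mem hg ((K i).smul_mem c (hfK i))
        have h1 := low _ hg' (by
          rw [Finsupp.sub_apply, Finsupp.smul_apply, hfd, hc]; exact sub_self _)
        have h2 : (⟨g, hg.1⟩ : N) = ⟨g - c • f i, hg'.1⟩ + c • v ⟨i, hdi⟩ := by
          apply Subtype.ext
          change g = g - c • f i + c • f i
          abel
        rw [h2]
        exact Submodule.add_mem _ h1 (Submodule.smul_mem _ _ (Submodule.subset_span ⟨_, rfl⟩))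
  refine Module.Free.of_basis (Module.Basis.mk hli ?_)
  rintro ⟨g, hg⟩ -
  by_cases hz : g = 0
  · have : (⟨g, hg⟩ : N) = 0 := Subtype.ext hz
    rw [this]; exact Submodule.zero_mem _
  · obtain ⟨j, hj, hmax⟩ := g.support.exists_max_image id (Finsupp.support_nonempty_iff.2 hz)
    exact key j g ⟨hg, (Finsupp.mem_supported ℤ g).2 (fun x hx => hmax x hx)⟩

/-- subgroups of the span of an independent family are free -/
theorem free_of_le_span {ι M : Type*} [AddCommGroup M] (v : ι → M) (hv : LinearIndependent ℤ v)
    (H : AddSubgroup M) (hH : ∀ h ∈ H, h ∈ Submodule.span ℤ (Set.range v)) :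
    Module.Free ℤ H := by
  let A : H →ₗ[ℤ] Submodule.span ℤ (Set.range v) :=
    { toFun := fun h => ⟨h.1, hH h.1 h.2⟩
      map_add' := fun _ _ => rfl
      map_smul' := fun _ _ => rfl }
  let e := hv.repr ∘ₗ A
  have hA : Function.Injective A := fun a b h => Subtype.ext (congrArg (fun x => x.1) h)
  have he : Function.Injective e := by
    have h2 : Function.Injective hv.repr := by
      apply LinearMap.ker_eq_bot.1; exact hv.repr_ker
    exact h2.comp hA
  have := free_sub_finsupp (LinearMap.range e)
  exact Module.Free.of_equiv (LinearEquiv.ofInjective e he).symm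

theorem tri {G I W : Type*} [LT W] [WellFoundedLT W] (μ : G → W) (p : I → G)
    (hp : Function.Injective p) (c : I → ℤ) (hc : ∀ i, c i ≠ 0) (e : I → FreeAbelianGroup G)
    (he : ∀ i, e i ∈ AddSubgroup.closure (FreeAbelianGroup.of '' {g | μ g < μ (p i)})) :
    ∃ Φ : G → (G →₀ ℚ), (∀ g, g ∉ Set.range p → Φ g = Finsupp.single g 1) ∧
      ∀ i, c i • Φ (p i) = FreeAbelianGroup.lift Φ (e i) := by
  classical
  have wf : WellFounded (fun a b : G => μ a < μ b) := InvImage.wf μ wellFounded_lt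
  let step : (g : G) → ((g' : G) → μ g' < μ g → (G →₀ ℚ)) → (G →₀ ℚ) := fun g ih =>
    if h : ∃ i, p i = g then
      ((c h.choose : ℚ)⁻¹) • FreeAbelianGroup.lift
        (fun g' => if h' : μ g' < μ g then ih g' h' else 0) (e h.choose)
    else Finsupp.single g 1
  let Φ := wf.fix step
  have hΦ : ∀ g, Φ g = step g (fun g' _ => Φ g') := fun g => wf.fix_eq step g
  refine ⟨Φ, ?_, ?_⟩
  · intro g hg
    rw [hΦ]
    exact dif_neg hg
  · intro i
    rw [hΦ]
    have h : ∃ j, p j = p i := ⟨i, rfl⟩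
    have hi : h.choose = i := hp h.choose_spec
    simp only [step, dif_pos h, hi]
    rw [← Int.cast_smul_eq_zsmul ℚ, smul_smul, mul_inv_cancel₀ (by exact_mod_cast hc i), one_smul]
    have := he i
    have hle : AddSubgroup.closure (FreeAbelianGroup.of '' {g | μ g < μ (p i)}) ≤
      AddMonoidHom.eqLocus (FreeAbelianGroup.lift
        (fun g' => if h' : μ g' < μ (p i) then Φ g' else 0)) (FreeAbelianGroup.lift Φ) := by
      rw [AddSubgroup.closure_le]
      rintro _ ⟨g, hg, rfl⟩
      change FreeAbelianGroup.lift _ _ = FreeAbelianGroup.lift _ _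
      rw [FreeAbelianGroup.lift_apply_of, FreeAbelianGroup.lift_apply_of]
      exact dif_pos hg
    exact hle this

theorem alg {G I W : Type*} [LT W] [WellFoundedLT W] (μ : G → W) (p : I → G)
    (hp : Function.Injective p) (c : I → ℤ) (hc : ∀ i, c i ≠ 0) (rel : I → FreeAbelianGroup G)
    (good : Set G)
    (he : ∀ i, c i • FreeAbelianGroup.of (p i) - rel i ∈
      AddSubgroup.closure (FreeAbelianGroup.of '' {g | μ g < μ (p i)}))
    (hgood : ∀ i, p i ∈ good → (c i = 1 ∨ c i = -1) ∧ c i • FreeAbelianGroup.of (p i) - rel i ∈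
      AddSubgroup.closure (FreeAbelianGroup.of '' {g | μ g < μ (p i) ∧ g ∈ good}))
    (R : AddSubgroup (FreeAbelianGroup G)) (hR : R = AddSubgroup.closure (Set.range rel))
    (H : AddSubgroup (FreeAbelianGroup G ⧸ R))
    (hH : ∀ h ∈ H, ∃ a ∈ AddSubgroup.closure (FreeAbelianGroup.of '' good),
      (QuotientAddGroup.mk a : FreeAbelianGroup G ⧸ R) = h) : Module.Free ℤ H := by
  classical
  obtain ⟨Φ, hΦ1, hΦ2⟩ := tri μ p hp c hc _ he
  have hker : R ≤ (FreeAbelianGroup.lift Φ).ker := by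
    rw [hR, AddSubgroup.closure_le]
    rintro _ ⟨i, rfl⟩
    have h := hΦ2 i
    rw [map_sub, map_zsmul, FreeAbelianGroup.lift_apply_of] at h
    exact sub_eq_self.1 h.symm
  let Ψ : (FreeAbelianGroup G ⧸ R) →+ (G →₀ ℚ) := QuotientAddGroup.lift R _ hker
  let v : {g : G // g ∉ Set.range p} → FreeAbelianGroup G ⧸ R :=
    fun g => QuotientAddGroup.mk (FreeAbelianGroup.of g.1)
  have hΨv : ∀ g, Ψ (v g) = Finsupp.single g.1 1 := by
    intro g
    change FreeAbelianGroup.lift Φ (FreeAbelianGroup.of g.1) = _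
    rw [FreeAbelianGroup.lift_apply_of, hΦ1 _ g.2]
  have hv : LinearIndependent ℤ v := by
    apply LinearIndependent.of_comp Ψ.toIntLinearMap
    have h1 : LinearIndependent ℚ (fun g : {g : G // g ∉ Set.range p} =>
        (Finsupp.single g.1 1 : G →₀ ℚ)) :=
      (Finsupp.linearIndependent_single_one ℚ G).comp _ Subtype.val_injective
    have h2 := h1.restrict_scalars' ℤ
    have heq : (Ψ.toIntLinearMap ∘ v) = fun g : {g : G // g ∉ Set.range p} =>
        (Finsupp.single g.1 1 : G →₀ ℚ) := funext hΨv
    rw [heq]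
    exact h2
  apply free_of_le_span v hv H
  let N : AddSubgroup (FreeAbelianGroup G ⧸ R) :=
    (Submodule.span ℤ (Set.range v)).toAddSubgroup
  have hrel : ∀ i, (QuotientAddGroup.mk (rel i) : FreeAbelianGroup G ⧸ R) = 0 := by
    intro i
    rw [QuotientAddGroup.eq_zero_iff, hR]
    exact AddSubgroup.subset_closure ⟨i, rfl⟩
  have hgen : ∀ g ∈ good, (QuotientAddGroup.mk (FreeAbelianGroup.of g) : FreeAbelianGroup G ⧸ R) ∈ N := by
    intro g
    induction g using (InvImage.wf μ wellFounded_lt).induction with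
    | h g ih =>
      intro hg
      by_cases hgp : g ∈ Set.range p
      · obtain ⟨i, rfl⟩ := hgp
        obtain ⟨hci, hcl⟩ := hgood i hg
        have hle : AddSubgroup.closure (FreeAbelianGroup.of '' {g | μ g < μ (p i) ∧ g ∈ good}) ≤
            N.comap (QuotientAddGroup.mk' R) := by
          rw [AddSubgroup.closure_le]
          rintro _ ⟨g', hg', rfl⟩
          exact ih g' hg'.1 hg'.2
        have h1 : QuotientAddGroup.mk' R (c i • FreeAbelianGroup.of (p i) - rel i) ∈ N := hle hcl
        rw [map_sub, map_zsmul] at h1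
        change c i • QuotientAddGroup.mk (FreeAbelianGroup.of (p i)) -
          (QuotientAddGroup.mk (rel i) : FreeAbelianGroup G ⧸ R) ∈ N at h1
        rw [hrel, sub_zero] at h1
        rcases hci with h | h
        · rwa [h, one_smul] at h1
        · rw [h, neg_smul, one_smul] at h1
          exact N.neg_mem_iff.1 h1
      · exact Submodule.subset_span ⟨⟨g, hgp⟩, rfl⟩
  intro h hh
  obtain ⟨a, ha, rfl⟩ := hH h hh
  have hle : AddSubgroup.closure (FreeAbelianGroup.of '' good) ≤
      N.comap (QuotientAddGroup.mk' R) := by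
    rw [AddSubgroup.closure_le]
    rintro _ ⟨g', hg', rfl⟩
    exact hgen g' hg'
  exact hle ha


def clStep {k : ℕ} {Φ : Type w} (Nb : (Fin (k + 1) → Φ) → Set Φ) (A : Set Φ) : Set Φ :=
  A ∪ ⋃ η ∈ {η : Fin (k + 1) → Φ | ∀ m, η m ∈ A}, Nb η

theorem clStep_mono {k : ℕ} {Φ : Type w} (Nb : (Fin (k + 1) → Φ) → Set Φ) :
    Monotone (clStep Nb) := by
  intro A B hAB
  apply Set.union_subset_union hAB
  apply Set.biUnion_subset_biUnion_left
  exact fun η hη m => hAB (hη m)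

theorem card_tuples {k : ℕ} {Φ : Type w} (κ : Cardinal.{w}) (hκ : ℵ₀ ≤ κ) (A : Set Φ)
    (hA : #A ≤ κ) : #{η : Fin (k + 1) → Φ | ∀ m, η m ∈ A} ≤ κ := by
  let f : {η : Fin (k + 1) → Φ | ∀ m, η m ∈ A} → (Fin (k + 1) → A) := fun η m => ⟨η.1 m, η.2 m⟩
  have hf : Function.Injective f := by
    intro a b h
    apply Subtype.ext
    funext m
    exact congrArg Subtype.val (congrFun h m)
  refine (Cardinal.mk_le_of_injective hf).trans ?_
  have : #(Fin (k + 1) → A) = #A ^ ((k + 1 : ℕ) : Cardinal) := by simp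
  rw [this]
  refine (Cardinal.power_le_power_right hA).trans ?_
  rw [Cardinal.power_natCast]
  exact Cardinal.power_nat_le hκ

theorem card_biUnion {α β : Type w} (κ : Cardinal.{w}) (hκ : ℵ₀ ≤ κ) (s : Set α) (hs : #s ≤ κ)
    (f : α → Set β) (hf : ∀ a ∈ s, #(f a) ≤ κ) : #(⋃ a ∈ s, f a : Set β) ≤ κ := by
  rw [Set.biUnion_eq_iUnion]
  refine (Cardinal.mk_iUnion_le _).trans ?_
  refine (mul_le_mul' hs (ciSup_le' (fun a : s => hf a.1 a.2))).trans ?_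
  rw [Cardinal.mul_eq_self hκ]

theorem card_clStep {k : ℕ} {Φ : Type w} (Nb : (Fin (k + 1) → Φ) → Set Φ)
    (hNb : ∀ η, (Nb η).Countable) (κ : Cardinal.{w}) (hκ : ℵ₀ ≤ κ) (A : Set Φ)
    (hA : #A ≤ κ) : #(clStep Nb A) ≤ κ := by
  refine (Cardinal.mk_union_le _ _).trans ?_
  refine Cardinal.add_le_of_le hκ hA ?_
  apply card_biUnion κ hκ _ (card_tuples κ hκ A hA)
  intro η _
  exact (Cardinal.le_aleph0_iff_set_countable.2 (hNb η)).trans hκ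

theorem filt {k : ℕ} {Φ : Type w} (Λ' : Set (Fin (k + 1) → Φ)) (hne : Λ'.Nonempty)
    (κ : Cardinal.{w}) (hκ : ℵ₀ ≤ κ) (hΛ : #Λ' ≤ Order.succ κ)
    (Nb : (Fin (k + 1) → Φ) → Set Φ) (hNb : ∀ η, (Nb η).Countable) :
    ∃ (W : Type w) (_ : LinearOrder W) (_ : WellFoundedLT W) (c : Φ → W),
      (∀ η ∈ Λ', ∀ φ ∈ Nb η, ∃ m, c φ ≤ c (η m)) ∧
      ∀ ε, #{η | η ∈ Λ' ∧ ∀ m, c (η m) ≤ ε} ≤ κ := by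
  classical
  obtain ⟨_, _, hord⟩ := Cardinal.exists_ord_eq_type_lt (↥Λ')
  have hIic : ∀ w : Λ', #(Set.Iic w) ≤ κ := by
    intro w
    have h1 : #(Set.Iio w) < #Λ' := by
      have := Ordinal.typein_lt_type (α := Λ') (· < ·) w
      rw [← hord, Cardinal.lt_ord, Ordinal.card_typein] at this
      exact this
    have h2 : #(Set.Iio w) ≤ κ := Order.lt_succ_iff.1 (h1.trans_le hΛ)
    rw [← Set.Iio_insert]
    refine Cardinal.mk_insert_le.trans ?_
    exact Cardinal.add_le_of_le hκ h2 (Cardinal.one_le_aleph0.trans hκ)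
  let U0 : Λ' → Set Φ := fun w => ⋃ η ∈ Set.Iic w, Set.range η.1
  have hU0m : Monotone U0 := fun a b hab =>
    Set.biUnion_subset_biUnion_left (Set.Iic_subset_Iic.2 hab)
  let Un : ℕ → Λ' → Set Φ := fun n w => (clStep Nb)^[n] (U0 w)
  have hUnm : ∀ n, Monotone (Un n) := fun n a b hab => (clStep_mono Nb).iterate n (hU0m hab)
  have hUs : ∀ n w, Un (n + 1) w = clStep Nb (Un n w) := fun n w =>
    Function.iterate_succ_apply' _ _ _
  have hUc : ∀ n w, #(Un n w) ≤ κ := by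
    intro n w
    induction n with
    | zero =>
      apply card_biUnion κ hκ _ (hIic w)
      intro a _
      exact (Cardinal.le_aleph0_iff_set_countable.2 (Set.countable_range _)).trans hκ
    | succ n ih => rw [hUs]; exact card_clStep Nb hNb κ hκ _ ih
  have hUnn : ∀ w, Monotone (fun n => Un n w) := fun w => monotone_nat_of_le_succ fun n => by
    rw [hUs]; exact Set.subset_union_left
  let U : Λ' → Set Φ := fun w => ⋃ n, Un n w
  have hUm : Monotone U := fun a b hab => Set.iUnion_mono fun n => hUnm n hab
  have hUcard : ∀ w, #(U w) ≤ κ := by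
    intro w
    have : U w = ⋃ n ∈ (Set.univ : Set (ULift.{w} ℕ)), Un n.down w := by
      ext x; simp [U, ULift.exists]
    rw [this]
    apply card_biUnion κ hκ
    · exact (Cardinal.mk_le_aleph0).trans hκ
    · intro a _; exact hUc _ _
  have hUcl : ∀ w η, (∀ m, η m ∈ U w) → Nb η ⊆ U w := by
    intro w η hη
    have : ∀ m, ∃ n, η m ∈ Un n w := fun m => Set.mem_iUnion.1 (hη m)
    choose n hn using this
    let M := Finset.univ.sup n
    have hM : ∀ m, η m ∈ Un M w := fun m => hUnn w (Finset.le_sup (Finset.mem_univ m)) (hn m)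
    intro φ hφ
    refine Set.mem_iUnion.2 ⟨M + 1, ?_⟩
    rw [hUs]
    exact Or.inr (Set.mem_biUnion (x := η) hM hφ)
  obtain ⟨η0, hη0⟩ := hne
  have hex : ∀ φ, ∃ w : Λ', (∃ w', φ ∈ U w') → (φ ∈ U w ∧ ∀ w', φ ∈ U w' → w ≤ w') := by
    intro φ
    by_cases h : ∃ w', φ ∈ U w'
    · refine ⟨wellFounded_lt.min {w | φ ∈ U w} h, fun _ => ⟨wellFounded_lt.min_mem _ h, ?_⟩⟩
      intro w' hw'
      exact not_lt.1 (wellFounded_lt.not_lt_min {w | φ ∈ U w} hw')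
    · exact ⟨⟨η0, hη0⟩, fun h' => absurd h' h⟩
  choose c hc using hex
  have hmem : ∀ η (h : η ∈ Λ') m, η m ∈ U ⟨η, h⟩ := by
    intro η h m
    refine Set.mem_iUnion.2 ⟨0, ?_⟩
    exact Set.mem_biUnion (x := (⟨η, h⟩ : Λ')) (Set.mem_Iic.2 le_rfl) ⟨m, rfl⟩
  have hin : ∀ η ∈ Λ', ∀ ε, (∀ m, c (η m) ≤ ε) → ∀ m, η m ∈ U ε := by
    intro η h ε hε m
    exact hUm (hε m) (hc (η m) ⟨_, hmem η h m⟩).1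
  refine ⟨Λ', inferInstance, inferInstance, c, ?_, ?_⟩
  · intro η h φ hφ
    obtain ⟨m, -, hm⟩ := Finset.univ.exists_max_image (fun m => c (η m)) Finset.univ_nonempty
    refine ⟨m, ?_⟩
    have := hUcl (c (η m)) η (hin η h _ (fun m' => hm m' (Finset.mem_univ _))) hφ
    exact (hc φ ⟨_, this⟩).2 _ this
  · intro ε
    refine (Cardinal.mk_le_mk_of_subset ?_).trans (card_tuples (k := k) κ hκ (U ε) (hUcard ε))
    rintro η ⟨h, hε⟩
    exact hin η h ε hε


theorem restrictAt_eq {k : ℕ} {S : Type w} {η η' : Fin (k + 1) → ℕ → S} {m m' : Fin (k + 1)}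
    {n n' : ℕ} (h : restrictAt η m n = restrictAt η' m' n') :
    m = m' ∧ n = n' ∧ (∀ l, l ≠ m → η l = η' l) ∧ ∀ i < n, η m i = η' m i := by
  have hm : m = m' := congrArg Res.m h
  subst hm
  have hs : (List.ofFn fun i : Fin n => η m i) = List.ofFn fun i : Fin n' => η' m i :=
    congrArg Res.seq h
  have hn : n = n' := by simpa using congrArg List.length hs
  subst hn
  have hr : (fun l (_ : l ≠ m) => η l) = fun l (_ : l ≠ m) => η' l := by
    simpa [restrictAt] using And.right (by simpa [restrictAt] using h :
      _ ∧ ((fun l (_ : l ≠ m) => η l) = fun l (_ : l ≠ m) => η' l))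
  refine ⟨rfl, rfl, fun l hl => congrFun (congrFun hr l) hl, fun i hi => ?_⟩
  have := congrFun (List.ofFn_injective hs) ⟨i, hi⟩
  exact this

/-- distinct tuples are eventually separated by any restriction -/
theorem restrictAt_sep {k : ℕ} {S : Type w} {η η' : Fin (k + 1) → ℕ → S} (hne : η ≠ η')
    (m : Fin (k + 1)) : ∃ N, ∀ n ≥ N, restrictAt η m n ≠ restrictAt η' m n := by
  by_contra hcon
  push Not at hcon
  apply hne
  funext l i
  obtain ⟨n, hn, h⟩ := hcon (i + 1)
  obtain ⟨-, -, h1, h2⟩ := restrictAt_eq h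
  by_cases hl : l = m
  · subst hl; exact h2 i hn
  · rw [h1 l hl]

def GoodOrd {k : ℕ} {S : Type w} (Λ' : Set (Fin (k + 1) → ℕ → S))
    (P : (Fin (k + 1) → ℕ → S) → Set (Fin (k + 1) → ℕ → S))
    (Q : (Fin (k + 1) → ℕ → S) → Set (Res k S))
    (u : (Fin (k + 1) → ℕ → S) → Finset (Fin (k + 1))) : Prop :=
  ∃ (r : (Fin (k + 1) → ℕ → S) → (Fin (k + 1) → ℕ → S) → Prop)
    (ℓ : (Fin (k + 1) → ℕ → S) → Fin (k + 1)) (N : (Fin (k + 1) → ℕ → S) → ℕ),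
    WellFounded r ∧ (∀ a b, a ≠ b → r a b ∨ r b a) ∧
    ∀ η ∈ Λ', ℓ η ∈ u η ∧ (∀ ν ∈ Λ', ν ∈ P η → r ν η) ∧
      ∀ η' ∈ Λ', ∀ n ≥ N η,
        (r η' η → restrictAt η (ℓ η) n ≠ restrictAt η' (ℓ η) n) ∧
        (r η' η ∨ η' = η → restrictAt η (ℓ η) n ∉ Q η')

def glue {T W : Type*} [LT W] (B : T → W) (r : W → T → T → Prop) (a b : T) : Prop :=
  B a < B b ∨ (B a = B b ∧ r (B a) a b)

theorem glue_wf {T W : Type*} [LT W] [WellFoundedLT W] (B : T → W) (r : W → T → T → Prop)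
    (hr : ∀ w, WellFounded (r w)) : WellFounded (glue B r) := by
  have key : ∀ w, ∀ a, B a = w → Acc (glue B r) a := by
    intro w
    induction w using WellFoundedLT.induction with
    | ind w ih =>
      intro a
      induction a using (hr w).induction with
      | h a iha =>
        intro ha
        constructor
        rintro b (hb | ⟨hb, hrb⟩)
        · exact ih (B b) (ha ▸ hb) b rfl
        · rw [hb, ha] at hrb
          exact iha b hrb (hb.trans ha)
  exact ⟨fun a => key _ a rfl⟩

theorem glue_trich {T W : Type*} [LinearOrder W] (B : T → W) (r : W → T → T → Prop)
    (hr : ∀ w, ∀ a b, a ≠ b → r w a b ∨ r w b a) (a b : T) (hab : a ≠ b) :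
    glue B r a b ∨ glue B r b a := by
  rcases lt_trichotomy (B a) (B b) with h | h | h
  · exact Or.inl (Or.inl h)
  · rcases hr (B a) a b hab with h' | h'
    · exact Or.inl (Or.inr ⟨h, h'⟩)
    · exact Or.inr (Or.inr ⟨h.symm, h ▸ h'⟩)
  · exact Or.inr (Or.inl h)

theorem lemA_zero {k : ℕ} {S : Type w} (Λ' : Set (Fin (k + 1) → ℕ → S))
    (P : (Fin (k + 1) → ℕ → S) → Set (Fin (k + 1) → ℕ → S))
    (Q : (Fin (k + 1) → ℕ → S) → Set (Res k S))
    (u : (Fin (k + 1) → ℕ → S) → Finset (Fin (k + 1)))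
    (hP : ∀ η, (P η).Finite) (hwf : WellFounded (fun ν η => ν ∈ P η))
    (hQ : ∀ η, (Q η).Finite) (hΛ : Λ'.Countable) (hu : ∀ η ∈ Λ', (u η).Nonempty) :
    GoodOrd Λ' P Q u := by
  classical
  obtain ⟨e, he⟩ := Set.countable_iff_exists_injOn.1 hΛ
  obtain ⟨h, hh⟩ : ∃ h : (Fin (k + 1) → ℕ → S) → ℕ, (∀ η, e η ≤ h η) ∧
      ∀ η, ∀ ν ∈ P η, h ν < h η := by
    let step : (η : Fin (k + 1) → ℕ → S) → ((ν : Fin (k + 1) → ℕ → S) → ν ∈ P η → ℕ) → ℕ :=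
      fun η ih => e η + ∑ ν ∈ (hP η).toFinset.attach, (ih ν.1 ((hP η).mem_toFinset.1 ν.2) + 1)
    refine ⟨hwf.fix step, fun η => ?_, fun η ν hν => ?_⟩
    · rw [hwf.fix_eq]; exact Nat.le_add_right _ _
    · rw [hwf.fix_eq step η]
      have := Finset.single_le_sum (s := (hP η).toFinset.attach)
        (f := fun ν => hwf.fix step ν.1 + 1) (fun _ _ => Nat.zero_le _)
        (Finset.mem_attach _ ⟨ν, (hP η).mem_toFinset.2 hν⟩)
      change hwf.fix step ν + 1 ≤ _ at this
      change hwf.fix step ν < e η + ∑ ν ∈ (hP η).toFinset.attach, (hwf.fix step ν.1 + 1)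
      omega
  let r := glue h (fun _ => (WellOrderingRel : (Fin (k + 1) → ℕ → S) → _ → Prop))
  have hrfin : ∀ η, {η' | η' ∈ Λ' ∧ h η' ≤ h η}.Finite := by
    intro η
    apply Set.Finite.of_finite_image (f := e)
    · apply (Set.finite_Iic (h η)).subset
      rintro _ ⟨η', ⟨-, h2⟩, rfl⟩
      exact (hh.1 η').trans h2
    · exact he.mono fun x hx => hx.1
  have hrle : ∀ η η', r η' η → h η' ≤ h η := by
    rintro η η' (h1 | ⟨h1, -⟩)
    · exact h1.le
    · exact h1.le
  let ℓ : (Fin (k + 1) → ℕ → S) → Fin (k + 1) := fun η =>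
    if hη : (u η).Nonempty then hη.choose else 0
  have hNex : ∀ η η', ∃ N, ∀ n ≥ N, (η ≠ η' → restrictAt η (ℓ η) n ≠ restrictAt η' (ℓ η) n) ∧
      restrictAt η (ℓ η) n ∉ Q η' := by
    intro η η'
    obtain ⟨N1, hN1⟩ : ∃ N, ∀ n ≥ N, (η ≠ η' → restrictAt η (ℓ η) n ≠ restrictAt η' (ℓ η) n) := by
      by_cases hne : η = η'
      · exact ⟨0, fun n _ h => absurd hne h⟩
      · obtain ⟨N, hN⟩ := restrictAt_sep hne (ℓ η)
        exact ⟨N, fun n hn _ => hN n hn⟩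
    refine ⟨max N1 ((hQ η').toFinset.sup (fun ρ => ρ.seq.length) + 1), fun n hn =>
      ⟨hN1 n (le_trans (le_max_left _ _) hn), fun hmem => ?_⟩⟩
    have h1 := Finset.le_sup (f := fun ρ : Res k S => ρ.seq.length) ((hQ η').mem_toFinset.2 hmem)
    have h2 := le_trans (le_max_right _ _) hn
    have h3 : (restrictAt η (ℓ η) n).seq.length = n := by simp [restrictAt]
    simp only [h3] at h1
    omega
  choose N0 hN0 using hNex
  refine ⟨r, ℓ, fun η => (hrfin η).toFinset.sup (N0 η), glue_wf _ _ (fun _ => WellOrderingRel.isWellOrder.wf),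
    glue_trich _ _ (fun _ a b hab => ?_), fun η hη => ⟨?_, fun ν _ hν => Or.inl (hh.2 _ _ hν), ?_⟩⟩
  · rcases (WellOrderingRel.isWellOrder).trichotomous a b with _
    by_contra hcon
    push Not at hcon
    exact hab ((WellOrderingRel.isWellOrder).trichotomous a b hcon.1 hcon.2)
  · simp only [ℓ, dif_pos (hu η hη)]
    exact (hu η hη).choose_spec
  · intro η' hη' n hn
    have hN : h η' ≤ h η → N0 η η' ≤ n := fun hle =>
      le_trans (Finset.le_sup (f := N0 η) ((hrfin η).mem_toFinset.2 ⟨hη', hle⟩)) hn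
    refine ⟨fun hr => ?_, fun hr => ?_⟩
    · refine (hN0 η η' n (hN (hrle _ _ hr))).1 ?_
      rintro rfl
      exact (glue_wf h _ (fun _ => WellOrderingRel.isWellOrder.wf)).irrefl.irrefl _ hr
    · refine (hN0 η η' n (hN ?_)).2
      rcases hr with hr | rfl
      · exact hrle _ _ hr
      · exact le_rfl

theorem lemA {k : ℕ} {S : Type w}
    (P : (Fin (k + 1) → ℕ → S) → Set (Fin (k + 1) → ℕ → S))
    (Q : (Fin (k + 1) → ℕ → S) → Set (Res k S))
    (hP : ∀ η, (P η).Finite) (hwf : WellFounded (fun ν η => ν ∈ P η))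
    (hQ : ∀ η, (Q η).Finite) (j : ℕ) : ∀ (Λ' : Set (Fin (k + 1) → ℕ → S))
    (u : (Fin (k + 1) → ℕ → S) → Finset (Fin (k + 1)))
    (_ : #Λ' ≤ Cardinal.aleph j) (_ : ∀ η ∈ Λ', j + 1 ≤ (u η).card),
    GoodOrd Λ' P Q u := by
  classical
  induction j with
  | zero =>
    intro Λ' u hΛ hu
    apply lemA_zero Λ' P Q u hP hwf hQ
    · rw [← Cardinal.le_aleph0_iff_set_countable]
      simpa using hΛ
    · intro η hη
      exact Finset.card_pos.1 (hu η hη)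
  | succ j ih =>
    intro Λ' u hΛ hu
    rcases Λ'.eq_empty_or_nonempty with rfl | hne
    · exact lemA_zero ∅ P Q u hP hwf hQ Set.countable_empty (fun η hη => absurd hη (Set.notMem_empty _))
    let Nb : (Fin (k + 1) → ℕ → S) → Set (ℕ → S) := fun η =>
      (⋃ ν ∈ P η, Set.range ν) ∪ ⋃ ρ ∈ Q η, ⋃ l : Fin (k + 1), {φ | ∃ hl, φ = ρ.rest l hl}
    have hNb : ∀ η, (Nb η).Countable := by
      intro η
      refine Set.Countable.union ?_ ?_
      · exact (hP η).countable.biUnion fun _ _ => Set.countable_range _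
      · refine (hQ η).countable.biUnion fun ρ _ => Set.countable_iUnion fun l => ?_
        apply Set.Subsingleton.countable
        rintro _ ⟨_, rfl⟩ _ ⟨_, rfl⟩
        rfl
    have hΛ2 : #Λ' ≤ Order.succ (Cardinal.aleph j) := by
      rw [Cardinal.succ_aleph]
      simpa using hΛ
    obtain ⟨W, _, _, c, hc1, hc2⟩ := filt Λ' hne _ (Cardinal.aleph0_le_aleph j) hΛ2 Nb hNb
    have hmax : ∀ η : Fin (k + 1) → ℕ → S, ∃ m, ∀ m', c (η m') ≤ c (η m) := fun η => by
      obtain ⟨m, -, hm⟩ := Finset.univ.exists_max_image (fun m => c (η m)) Finset.univ_nonempty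
      exact ⟨m, fun m' => hm m' (Finset.mem_univ _)⟩
    choose M hM using hmax
    let B : (Fin (k + 1) → ℕ → S) → W := fun η => c (η (M η))
    have hblock := fun ε => ih {η | η ∈ Λ' ∧ B η = ε} (fun η => (u η).erase (M η))
      ((Cardinal.mk_le_mk_of_subset (show {η | η ∈ Λ' ∧ B η = ε} ⊆
          {η | η ∈ Λ' ∧ ∀ m, c (η m) ≤ ε} from
            fun η hη => ⟨hη.1, fun m => (hM η m).trans hη.2.le⟩)).trans (hc2 ε))
      (fun η hη => by
        have h1 := hu η hη.1
        have h2 := Finset.pred_card_le_card_erase (s := u η) (a := M η)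
        omega)
    choose r ℓ N hrwf hrt hr using hblock
    refine ⟨glue B r, fun η => ℓ (B η) η, fun η => N (B η) η, glue_wf _ _ hrwf,
      glue_trich _ _ hrt, fun η hη => ?_⟩
    obtain ⟨h1, h2, h3⟩ := hr (B η) η ⟨hη, rfl⟩
    have hne := (Finset.mem_erase.1 h1).1
    refine ⟨(Finset.mem_erase.1 h1).2, fun ν hν hνP => ?_, fun η' hη' n hn => ⟨?_, ?_⟩⟩
    · have hle : B ν ≤ B η := by
        obtain ⟨m, hm⟩ := hc1 η hη (ν (M ν)) (Or.inl (Set.mem_biUnion hνP ⟨_, rfl⟩))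
        exact hm.trans (hM η m)
      rcases hle.lt_or_eq with h | h
      · exact Or.inl h
      · exact Or.inr ⟨h, h ▸ h2 ν ⟨hν, h⟩ hνP⟩
    · rintro (hlt | ⟨heq, hrr⟩)
      · intro heq
        obtain ⟨-, -, h4, -⟩ := restrictAt_eq heq
        have := h4 (M η) hne.symm
        have h5 := hM η' (M η)
        rw [← this] at h5
        exact absurd hlt (not_lt.2 h5)
      · exact (h3 η' ⟨hη', heq⟩ n hn).1 (heq ▸ hrr)
    · intro hor
      have hcase : B η' < B η ∨ (B η' = B η ∧ (r (B η) η' η ∨ η' = η)) := by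
        rcases hor with (hlt | ⟨heq, hrr⟩) | rfl
        · exact Or.inl hlt
        · exact Or.inr ⟨heq, Or.inl (heq ▸ hrr)⟩
        · exact Or.inr ⟨rfl, Or.inr rfl⟩
      rcases hcase with hlt | ⟨heq, hrr⟩
      · intro hmem
        obtain ⟨m, hm⟩ := hc1 η' hη' (η (M η)) (Or.inr (Set.mem_biUnion hmem
          (Set.mem_iUnion.2 ⟨M η, hne.symm, rfl⟩)))
        exact absurd hlt (not_lt.2 (hm.trans (hM η' m)))
      · exact (h3 η' ⟨hη', heq⟩ n hn).2 hrr


def Pf {k : ℕ} {Sset : Set Ordinal.{u}} {Λ : Set (Fin (k + 1) → ℕ → ↥Sset)}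
    (F : ↥Λ → Set (FullOrRes k Sset)) (η : Fin (k + 1) → ℕ → ↥Sset) :
    Set (Fin (k + 1) → ℕ → ↥Sset) :=
  {ν | ∃ h : η ∈ Λ, Sum.inl ν ∈ F ⟨η, h⟩}

def Qf {k : ℕ} {Sset : Set Ordinal.{u}} {Λ : Set (Fin (k + 1) → ℕ → ↥Sset)}
    (F : ↥Λ → Set (FullOrRes k Sset)) (η : Fin (k + 1) → ℕ → ↥Sset) :
    Set (Res k ↥Sset) :=
  {ρ | ∃ h : η ∈ Λ, Sum.inr ρ ∈ F ⟨η, h⟩}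

open Classical in
noncomputable def tf {k : ℕ} {Sset : Set Ordinal.{u}} {Λ : Set (Fin (k + 1) → ℕ → ↥Sset)}
    (F : ↥Λ → Set (FullOrRes k Sset)) (η : Fin (k + 1) → ℕ → ↥Sset) : Ordinal.{u} :=
  if h : η ∈ Λ then sSup (⋃ w ∈ F ⟨η, h⟩, coordVals w (Fin.last k)) else 0

theorem coordVals_countable {k : ℕ} {Sset : Set Ordinal.{u}} (w : FullOrRes k Sset)
    (l : Fin (k + 1)) : (coordVals w l).Countable := by
  rcases w with ν | ρ
  · exact Set.countable_range _
  · simp only [coordVals]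
    split_ifs with h
    · have : {o : Ordinal | ∃ s ∈ ρ.seq, (s : Ordinal) = o} = (fun s : Sset => (s : Ordinal)) '' {s | s ∈ ρ.seq} := by
        ext o; simp
      rw [this]
      exact (List.finite_toSet ρ.seq).countable.image _
    · exact Set.countable_range _

theorem mem_coordVals_res {k : ℕ} {Sset : Set Ordinal.{u}} (η : Fin (k + 1) → ℕ → ↥Sset)
    (m l : Fin (k + 1)) (n i : ℕ) (hi : i < n) :
    (η l i : Ordinal) ∈ coordVals (Sum.inr (restrictAt η m n) : FullOrRes k Sset) l := by
  simp only [coordVals]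
  split_ifs with h
  · have h' : l = m := h
    subst h'
    exact ⟨η l i, List.mem_ofFn.2 ⟨⟨i, hi⟩, rfl⟩, rfl⟩
  · exact ⟨i, rfl⟩

theorem le_tf {k : ℕ} {Sset : Set Ordinal.{u}} {Λ : Set (Fin (k + 1) → ℕ → ↥Sset)}
    {F : ↥Λ → Set (FullOrRes k Sset)} (hreg : Regressive Λ F) {η : Fin (k + 1) → ℕ → ↥Sset}
    (h : η ∈ Λ) {w : FullOrRes k Sset} (hw : w ∈ F ⟨η, h⟩) {o : Ordinal}
    (ho : o ∈ coordVals w (Fin.last k)) : o ≤ tf F η := by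
  rw [tf, dif_pos h]
  have hc : (⋃ w ∈ F ⟨η, h⟩, coordVals w (Fin.last k)).Countable :=
    (hreg.1 _).biUnion fun w _ => coordVals_countable w _
  have : Countable (⋃ w ∈ F ⟨η, h⟩, coordVals w (Fin.last k) : Set Ordinal.{u}) := hc
  have : Small.{u} (⋃ w ∈ F ⟨η, h⟩, coordVals w (Fin.last k) : Set Ordinal.{u}) := inferInstance
  exact le_csSup Ordinal.bddAbove_of_small (Set.mem_biUnion hw ho)

theorem tf_lt {k : ℕ} {Sset : Set Ordinal.{u}} {Λ : Set (Fin (k + 1) → ℕ → ↥Sset)}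
    {F : ↥Λ → Set (FullOrRes k Sset)} (hreg : Regressive Λ F) {η : Fin (k + 1) → ℕ → ↥Sset}
    (h : η ∈ Λ) : ∃ i, tf F η < (η (Fin.last k) i : Ordinal) := by
  have := hreg.2.2 ⟨η, h⟩ (Fin.last k)
  rw [tf, dif_pos h]
  by_contra hcon
  push Not at hcon
  exact absurd this (not_lt.2 (ciSup_le' hcon))

theorem tf_dec {k : ℕ} {Sset : Set Ordinal.{u}} {Λ : Set (Fin (k + 1) → ℕ → ↥Sset)}
    {F : ↥Λ → Set (FullOrRes k Sset)} (hreg : Regressive Λ F) {ν η : Fin (k + 1) → ℕ → ↥Sset}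
    (hν : ν ∈ Pf F η) : tf F ν < tf F η := by
  obtain ⟨h, hm⟩ := hν
  have hνΛ : ν ∈ Λ := hreg.2.1 _ _ hm
  obtain ⟨i, hi⟩ := tf_lt hreg hνΛ
  exact hi.trans_le (le_tf hreg h hm ⟨i, rfl⟩)

theorem Pf_wf {k : ℕ} {Sset : Set Ordinal.{u}} {Λ : Set (Fin (k + 1) → ℕ → ↥Sset)}
    {F : ↥Λ → Set (FullOrRes k Sset)} (hreg : Regressive Λ F) :
    WellFounded (fun ν η => ν ∈ Pf F η) :=
  Subrelation.wf (r := InvImage (· < ·) (tf F)) (fun h => tf_dec hreg h)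
    (InvImage.wf _ wellFounded_lt)

theorem lemB {k : ℕ} {Sset : Set Ordinal.{u}} {Λ : Set (Fin (k + 1) → ℕ → ↥Sset)}
    {F : ↥Λ → Set (FullOrRes k Sset)} (hreg : Regressive Λ F) (hfs : Finitary F ∨ Simple F)
    (Λ' : Set (Fin (k + 1) → ℕ → ↥Sset)) (hsub : Λ' ⊆ Λ) (hcard : #Λ' ≤ Cardinal.aleph k) :
    GoodOrd Λ' (Pf F) (Qf F) (fun _ => Finset.univ) := by
  classical
  rcases hfs with hfin | hsim
  · apply lemA (Pf F) (Qf F) _ (Pf_wf hreg) _ k Λ' _ hcard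
    · intro η _; simp
    · intro η
      by_cases h : η ∈ Λ
      · have : Pf F η ⊆ Sum.inl ⁻¹' (F ⟨η, h⟩) := fun ν hν => hν.2
        exact ((hfin ⟨η, h⟩).preimage Sum.inl_injective.injOn).subset this
      · have : Pf F η = ∅ := Set.eq_empty_of_forall_notMem fun ν hν => h hν.1
        rw [this]; exact Set.finite_empty
    · intro η
      by_cases h : η ∈ Λ
      · have : Qf F η ⊆ Sum.inr ⁻¹' (F ⟨η, h⟩) := fun ν hν => hν.2
        exact ((hfin ⟨η, h⟩).preimage Sum.inr_injective.injOn).subset this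
      · have : Qf F η = ∅ := Set.eq_empty_of_forall_notMem fun ν hν => h hν.1
        rw [this]; exact Set.finite_empty
  · let B : (Fin (k + 1) → ℕ → ↥Sset) → Ordinal.{u} ×ₗ Ordinal.{u} := fun η =>
      toLex (tf F η, (η (Fin.last k) 0 : Ordinal))
    have hblock := fun ε => lemA (k := k) (S := ↥Sset) (fun _ => ∅) (fun _ => ∅)
      (fun _ => Set.finite_empty) ⟨fun a => ⟨a, fun b hb => absurd hb (Set.notMem_empty _)⟩⟩
      (fun _ => Set.finite_empty) k
      {η | η ∈ Λ' ∧ B η = ε} (fun _ => Finset.univ)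
      ((Cardinal.mk_le_mk_of_subset (fun η hη => hη.1)).trans hcard)
      (fun η hη => by simp)
    choose r ℓ N hrwf hrt hr using hblock
    have hI : ∀ η, ∃ i, η ∈ Λ → tf F η < (η (Fin.last k) i : Ordinal) := by
      intro η
      by_cases h : η ∈ Λ
      · obtain ⟨i, hi⟩ := tf_lt hreg h; exact ⟨i, fun _ => hi⟩
      · exact ⟨0, fun h' => absurd h' h⟩
    choose I hI using hI
    have hBt : ∀ η η', B η' ≤ B η → tf F η' ≤ tf F η := by
      intro η η' hle
      rcases Prod.Lex.toLex_le_toLex.1 hle with h | h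
      · exact h.le
      · exact h.1.le
    refine ⟨glue B r, fun η => ℓ (B η) η, fun η => max (N (B η) η) (I η + 1), glue_wf _ _ hrwf,
      glue_trich _ _ hrt, fun η hη => ?_⟩
    obtain ⟨-, h2, h3⟩ := hr (B η) η ⟨hη, rfl⟩
    refine ⟨Finset.mem_univ _, fun ν hν hνP => Or.inl ?_, fun η' hη' n hn => ⟨?_, ?_⟩⟩
    · exact Prod.Lex.toLex_lt_toLex.2 (Or.inl (tf_dec hreg hνP))
    · have hn1 : N (B η) η ≤ n := (le_max_left _ _).trans hn
      have hn2 : I η + 1 ≤ n := (le_max_right _ _).trans hn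
      rintro (hlt | ⟨heq, hrr⟩)
      · intro heq
        obtain ⟨-, -, h4, h5⟩ := restrictAt_eq heq
        have h6 : η (Fin.last k) 0 = η' (Fin.last k) 0 := by
          by_cases hl : Fin.last k = ℓ (B η) η
          · have : η (ℓ (B η) η) 0 = η' (ℓ (B η) η) 0 := h5 0 (by omega)
            rwa [← hl] at this
          · rw [h4 _ hl]
        have h7 : F ⟨η, hsub hη⟩ = F ⟨η', hsub hη'⟩ := hsim _ _ h6
        have h8 : tf F η = tf F η' := by
          rw [tf, tf, dif_pos (hsub hη), dif_pos (hsub hη'), h7]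
        have h9 : B η = B η' := by
          simp only [B, h6, h8]
        exact absurd hlt (by rw [h9]; exact lt_irrefl _)
      · exact (h3 η' ⟨hη', heq⟩ n hn1).1 (heq ▸ hrr)
    · intro hor hmem
      have hn2 : I η + 1 ≤ n := (le_max_right _ _).trans hn
      have hle : B η' ≤ B η := by
        rcases hor with (hlt | ⟨heq, hrr⟩) | rfl
        · exact hlt.le
        · exact heq.le
        · exact le_rfl
      obtain ⟨h, hmem⟩ := hmem
      have h5 := le_tf hreg h hmem (mem_coordVals_res η (ℓ (B η) η) (Fin.last k) n (I η) (by omega))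
      exact absurd (hI η (hsub hη)) (not_lt.2 (h5.trans (hBt _ _ hle)))

theorem exists_supp {G : Type*} (a : FreeAbelianGroup G) :
    ∃ s : Set G, s.Finite ∧ a ∈ AddSubgroup.closure (FreeAbelianGroup.of '' s) := by
  induction a using FreeAbelianGroup.induction_on with
  | zero => exact ⟨∅, Set.finite_empty, AddSubgroup.zero_mem _⟩
  | of x => exact ⟨{x}, Set.finite_singleton x, AddSubgroup.subset_closure ⟨x, rfl, rfl⟩⟩
  | neg x ih => obtain ⟨s, hs, h⟩ := ih; exact ⟨s, hs, AddSubgroup.neg_mem _ h⟩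
  | add x y hx hy =>
    obtain ⟨s, hs, h⟩ := hx
    obtain ⟨t, ht, h'⟩ := hy
    refine ⟨s ∪ t, hs.union ht, AddSubgroup.add_mem _ ?_ ?_⟩
    · exact AddSubgroup.closure_mono (Set.image_mono Set.subset_union_left) h
    · exact AddSubgroup.closure_mono (Set.image_mono Set.subset_union_right) h'

theorem countable_cl {T : Type*} (P : T → Set T) (hP : ∀ η, (P η).Countable)
    (hwf : WellFounded (fun ν η => ν ∈ P η)) (η : T) :
    {ν | Relation.ReflTransGen (fun ν η => ν ∈ P η) ν η}.Countable := by
  induction η using hwf.induction with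
  | h η ih =>
    have : {ν | Relation.ReflTransGen (fun ν η => ν ∈ P η) ν η} ⊆
        {η} ∪ ⋃ μ ∈ P η, {ν | Relation.ReflTransGen (fun ν η => ν ∈ P η) ν μ} := by
      intro ν hν
      rcases Relation.ReflTransGen.cases_tail hν with h | ⟨μ, h1, h2⟩
      · exact Or.inl h.symm
      · exact Or.inr (Set.mem_biUnion h2 h1)
    exact ((Set.countable_singleton η).union ((hP η).biUnion fun μ hμ => ih μ hμ)).mono this


theorem exists_closed {k : ℕ} {Sset : Set Ordinal.{u}} {Λ : Set (Fin (k + 1) → ℕ → ↥Sset)}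
    {F : ↥Λ → Set (FullOrRes k Sset)} (hreg : Regressive Λ F)
    (R : AddSubgroup (FreeAbelianGroup (Gen2 k Sset Λ)))
    (H : AddSubgroup (FreeAbelianGroup (Gen2 k Sset Λ) ⧸ R))
    (hH : #H < Cardinal.aleph (k + 1)) :
    ∃ Λ' : Set (Fin (k + 1) → ℕ → ↥Sset), Λ' ⊆ Λ ∧ #Λ' ≤ Cardinal.aleph k ∧
      (∀ η ∈ Λ', ∀ ν ∈ Pf F η, ν ∈ Λ') ∧
      ∀ h ∈ H, ∃ a ∈ AddSubgroup.closure (FreeAbelianGroup.of ''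
        {g : Gen2 k Sset Λ | ∀ η n, g = Gen2.Y η n → (η : Fin (k + 1) → ℕ → ↥Sset) ∈ Λ'}),
        (QuotientAddGroup.mk a : FreeAbelianGroup (Gen2 k Sset Λ) ⧸ R) = h := by
  have hk : #H ≤ Cardinal.aleph k := by
    rw [← Cardinal.succ_aleph] at hH
    exact Order.lt_succ_iff.1 hH
  have hal : ℵ₀ ≤ Cardinal.aleph (k : Ordinal.{u+1}) := Cardinal.aleph0_le_aleph _
  have hrep : ∀ h : FreeAbelianGroup (Gen2 k Sset Λ) ⧸ R,
      ∃ (a : FreeAbelianGroup (Gen2 k Sset Λ)) (s : Set (Gen2 k Sset Λ)), s.Finite ∧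
        a ∈ AddSubgroup.closure (FreeAbelianGroup.of '' s) ∧
        (QuotientAddGroup.mk a : FreeAbelianGroup (Gen2 k Sset Λ) ⧸ R) = h := by
    intro h
    obtain ⟨a, rfl⟩ := QuotientAddGroup.mk_surjective h
    obtain ⟨s, hs, ha⟩ := exists_supp a
    exact ⟨a, s, hs, ha, rfl⟩
  choose a s hs ha hmk using hrep
  have hPc : ∀ η, (Pf F η).Countable := by
    intro η
    by_cases hη : η ∈ Λ
    · have : Pf F η ⊆ Sum.inl ⁻¹' (F ⟨η, hη⟩) := by
        rintro ν ⟨_, h⟩; exact h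
      exact ((hreg.1 _).preimage Sum.inl_injective).mono this
    · have : Pf F η = ∅ := by
        ext ν; simp only [Set.mem_empty_iff_false, iff_false]
        rintro ⟨h, _⟩; exact hη h
      rw [this]; exact Set.countable_empty
  let Λ0 : Set (Fin (k + 1) → ℕ → ↥Sset) := ⋃ h ∈ (H : Set _), ⋃ g ∈ s h,
    {η | ∃ (hη : η ∈ Λ) (n : ℕ), Gen2.Y ⟨η, hη⟩ n = g}
  have hΛ0 : #Λ0 ≤ Cardinal.aleph k := by
    apply card_biUnion _ hal _ hk
    intro h _
    refine (Cardinal.le_aleph0_iff_set_countable.2 ?_).trans hal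
    refine (hs h).countable.biUnion fun g _ => ?_
    refine Set.Subsingleton.countable ?_
    rintro η ⟨hη, n, rfl⟩ η' ⟨hη', n', h'⟩
    injection h' with h1 h2
    exact (congrArg Subtype.val h1).symm
  have hΛ0s : Λ0 ⊆ Λ := by
    intro η hη
    simp only [Λ0, Set.mem_iUnion] at hη
    obtain ⟨_, _, _, _, h, _⟩ := hη
    exact h
  refine ⟨⋃ η ∈ Λ0, {ν | Relation.ReflTransGen (fun ν η => ν ∈ Pf F η) ν η}, ?_, ?_, ?_, ?_⟩
  · intro ν hν
    simp only [Set.mem_iUnion] at hν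
    obtain ⟨η, hη, h⟩ := hν
    rcases Relation.ReflTransGen.cases_head h with h | ⟨c, ⟨hc, h1⟩, _⟩
    · rw [h]; exact hΛ0s hη
    · exact hreg.2.1 _ _ h1
  · apply card_biUnion _ hal _ hΛ0
    intro η _
    exact (Cardinal.le_aleph0_iff_set_countable.2
      (countable_cl (Pf F) hPc (Pf_wf hreg) η)).trans hal
  · intro η hη ν hν
    simp only [Set.mem_iUnion] at hη ⊢
    obtain ⟨ξ, hξ, h⟩ := hη
    exact ⟨ξ, hξ, Relation.ReflTransGen.head hν h⟩
  · intro h hh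
    refine ⟨a h, ?_, hmk h⟩
    refine AddSubgroup.closure_mono (Set.image_mono ?_) (ha h)
    rintro g hg η n rfl
    simp only [Set.mem_iUnion]
    refine ⟨η, ?_, Relation.ReflTransGen.refl⟩
    simp only [Λ0, Set.mem_iUnion]
    exact ⟨h, hh, _, hg, η.2, n, rfl⟩

theorem lex_lt {W V : Type*} [Preorder W] [Preorder V] {a a' : ℕ} {b b' : W} {c c' : V}
    (h : a < a' ∨ a = a' ∧ (b < b' ∨ b = b' ∧ c < c')) :
    toLex (a, toLex (b, c)) < toLex (a', toLex (b', c')) := by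
  rw [Prod.Lex.toLex_lt_toLex]
  rcases h with h | ⟨h, h'⟩
  · exact Or.inl h
  · refine Or.inr ⟨h, ?_⟩
    rw [Prod.Lex.toLex_lt_toLex]
    exact h'

theorem main {k : ℕ} {Sset : Set Ordinal.{u}} {Λ : Set (Fin (k + 1) → ℕ → ↥Sset)}
    {F : ↥Λ → Set (FullOrRes k Sset)} (hreg : Regressive Λ F)
    (hfs : Finitary F ∨ Simple F)
    (b : ↥Λ → ℕ → ℤ) (z : ↥Λ → ℕ → FreeAbelianGroup (Gen2 k Sset Λ))
    (hz : ∀ (η : ↥Λ) (n : ℕ), z η n ∈ zSpan F η n)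
    (H : AddSubgroup (FreeAbelianGroup (Gen2 k Sset Λ) ⧸ relSub2 b z))
    (hH : #H < Cardinal.aleph (k + 1)) : Module.Free ℤ H := by
  classical
  obtain ⟨Λ', hsub, hcard, hcl, hHg⟩ := exists_closed hreg _ H hH
  obtain ⟨r, ℓ, N, hwf, htri, hgo⟩ := lemB hreg hfs Λ' hsub hcard
  have : IsWellFounded _ r := ⟨hwf⟩
  have : IsWellFounded _ (fun ν η => ν ∈ Pf F η) := ⟨Pf_wf hreg⟩
  let rk := IsWellFounded.rank r
  let rkF := IsWellFounded.rank (fun ν η => ν ∈ Pf F η)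
  have hrk : ∀ {x y}, r x y → rk x < rk y := fun h => IsWellFounded.rank_lt_of_rel h
  have hrkF : ∀ {x y}, x ∈ Pf F y → rkF x < rkF y := fun h => 
    IsWellFounded.rank_lt_of_rel (r := fun ν η => ν ∈ Pf F η) h
  let E : Res k ↥Sset → (Fin (k + 1) → ℕ → ↥Sset) → Prop := fun ρ η =>
    η ∈ Λ' ∧ ∃ n, N η ≤ n ∧ ρ = restrictAt η (ℓ η) n
  have Euniq : ∀ ρ η η', E ρ η → E ρ η' → η = η' := by
    rintro ρ η η' ⟨h1, n, hn, rfl⟩ ⟨h2, n', hn', heq⟩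
    by_contra hne
    obtain ⟨hm, hnn, -, -⟩ := restrictAt_eq heq
    subst hnn
    rcases htri _ _ hne with h | h
    · exact ((hgo η' h2).2.2 η h1 n hn').1 h (by rw [← heq, hm])
    · exact ((hgo η h1).2.2 η' h2 n hn).1 h (by rw [heq, hm])
  let W := ℕ ×ₗ (Ordinal.{u+1} ×ₗ ℕ)
  let μ : Gen2 k Sset Λ → W := fun g => match g with
    | Gen2.X ρ => if h : ∃ η, E ρ.1 η then toLex (1, toLex (rk h.choose, 0))
        else toLex (0, toLex (0, 0))
    | Gen2.Y η n => if η.1 ∈ Λ' then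
          (if N η.1 ≤ n then toLex (0, toLex (0, 0)) else toLex (1, toLex (rk η.1, N η.1 - n)))
        else toLex (2, toLex (rkF η.1, n))
  have μXE : ∀ (ρ : ↥(LambdaRes Λ)) η, E ρ.1 η → μ (Gen2.X ρ) = toLex (1, toLex (rk η, 0)) := by
    intro ρ η h
    have h' : ∃ η, E ρ.1 η := ⟨η, h⟩
    have : h'.choose = η := Euniq _ _ _ h'.choose_spec h
    simp only [μ, dif_pos h', this]
  have μXn : ∀ (ρ : ↥(LambdaRes Λ)), (¬ ∃ η, E ρ.1 η) →
      μ (Gen2.X ρ) = toLex (0, toLex (0, 0)) := by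
    intro ρ h
    simp only [μ, dif_neg h]
  have μY0 : ∀ (η : ↥Λ) n, η.1 ∈ Λ' → N η.1 ≤ n → μ (Gen2.Y η n) = toLex (0, toLex (0, 0)) := by
    intro η n h1 h2; simp only [μ, if_pos h1, if_pos h2]
  have μY1 : ∀ (η : ↥Λ) n, η.1 ∈ Λ' → ¬ N η.1 ≤ n →
      μ (Gen2.Y η n) = toLex (1, toLex (rk η.1, N η.1 - n)) := by
    intro η n h1 h2; simp only [μ, if_pos h1, if_neg h2]
  have μY2 : ∀ (η : ↥Λ) n, η.1 ∉ Λ' → μ (Gen2.Y η n) = toLex (2, toLex (rkF η.1, n)) := by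
    intro η n h1; simp only [μ, if_neg h1]
  let good : Set (Gen2 k Sset Λ) := {g | ∀ η n, g = Gen2.Y η n → η.1 ∈ Λ'}
  have goodX : ∀ ρ, Gen2.X ρ ∈ good := by intro ρ η n h; cases h
  have goodY : ∀ (η : ↥Λ) n, η.1 ∈ Λ' → Gen2.Y η n ∈ good := by
    intro η n h η' n' h'; injection h' with h1 h2; rw [← h1]; exact h
  let p : ↥Λ × ℕ → Gen2 k Sset Λ := fun i =>
    if i.1.1 ∈ Λ' then
      (if N i.1.1 ≤ i.2 then Gen2.X (resMem i.1 (ℓ i.1.1) i.2) else Gen2.Y i.1 i.2)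
    else Gen2.Y i.1 (i.2 + 1)
  have pA : ∀ (η : ↥Λ) n, η.1 ∈ Λ' → N η.1 ≤ n → p (η, n) = Gen2.X (resMem η (ℓ η.1) n) := by
    intro η n h1 h2; simp only [p, if_pos h1, if_pos h2]
  have pB : ∀ (η : ↥Λ) n, η.1 ∈ Λ' → ¬ N η.1 ≤ n → p (η, n) = Gen2.Y η n := by
    intro η n h1 h2; simp only [p, if_pos h1, if_neg h2]
  have pC : ∀ (η : ↥Λ) n, η.1 ∉ Λ' → p (η, n) = Gen2.Y η (n + 1) := by
    intro η n h1; simp only [p, if_neg h1]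
  have hp : Function.Injective p := by
    rintro ⟨η, n⟩ ⟨η', n'⟩ h
    by_cases h1 : η.1 ∈ Λ' <;> by_cases h1' : η'.1 ∈ Λ'
    · by_cases h2 : N η.1 ≤ n <;> by_cases h2' : N η'.1 ≤ n'
      · rw [pA _ _ h1 h2, pA _ _ h1' h2'] at h
        injection h with h
        have h := congrArg Subtype.val h
        have hE : η.1 = η'.1 := Euniq (resMem η (ℓ η.1) n).1 _ _ ⟨h1, n, h2, rfl⟩ ⟨h1', n', h2', h⟩
        obtain ⟨-, hn, -, -⟩ := restrictAt_eq h
        exact Prod.ext (Subtype.ext hE) hn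
      · rw [pA _ _ h1 h2, pB _ _ h1' h2'] at h
        cases h
      · rw [pB _ _ h1 h2, pA _ _ h1' h2'] at h
        cases h
      · rw [pB _ _ h1 h2, pB _ _ h1' h2'] at h
        injection h with h3 h4
        rw [h3, h4]
    · by_cases h2 : N η.1 ≤ n
      · rw [pA _ _ h1 h2, pC _ _ h1'] at h
        cases h
      · rw [pB _ _ h1 h2, pC _ _ h1'] at h
        injection h with h3 h4
        exact absurd (h3 ▸ h1) h1'
    · by_cases h2 : N η'.1 ≤ n'
      · rw [pA _ _ h1' h2, pC _ _ h1] at h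
        cases h
      · rw [pB _ _ h1' h2, pC _ _ h1] at h
        injection h with h3 h4
        exact absurd (h3 ▸ h1') h1
    · rw [pC _ _ h1, pC _ _ h1'] at h
      injection h with h3 h4
      rw [h3, Nat.succ_injective h4]
  let c : ↥Λ × ℕ → ℤ := fun i => if i.1.1 ∈ Λ' then -1 else (i.2.factorial : ℤ)
  let rel : ↥Λ × ℕ → FreeAbelianGroup (Gen2 k Sset Λ) := fun i =>
    (i.2.factorial : ℤ) • FreeAbelianGroup.of (Gen2.Y i.1 (i.2 + 1))
        - FreeAbelianGroup.of (Gen2.Y i.1 i.2)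
        - b i.1 i.2 • z i.1 i.2
        - ∑ m : Fin (k + 1), FreeAbelianGroup.of (Gen2.X (resMem i.1 m i.2))
  -- generators eliminated before `η`
  have Xlow : ∀ (η : ↥Λ) (ρ : ↥(LambdaRes Λ)) (j : ℕ), η.1 ∈ Λ' → (∀ η', E ρ.1 η' → r η' η.1) →
      μ (Gen2.X ρ) < toLex (1, toLex (rk η.1, j)) := by
    intro η ρ j h1 h2
    by_cases h : ∃ η', E ρ.1 η'
    · obtain ⟨η', h⟩ := h
      rw [μXE _ _ h]
      exact lex_lt (Or.inr ⟨rfl, Or.inl (hrk (h2 _ h))⟩)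
    · rw [μXn _ h]
      exact lex_lt (Or.inl one_pos)
  have Xle : ∀ (ρ : ↥(LambdaRes Λ)) (o : Ordinal.{u+1}) (j : ℕ),
      μ (Gen2.X ρ) < toLex (2, toLex (o, j)) := by
    intro ρ o j
    by_cases h : ∃ η', E ρ.1 η'
    · obtain ⟨η', h⟩ := h
      rw [μXE _ _ h]
      exact lex_lt (Or.inl one_lt_two)
    · rw [μXn _ h]
      exact lex_lt (Or.inl two_pos)
  -- the z part in the case `η ∈ Λ'`
  have zlow : ∀ (η : ↥Λ) (n j : ℕ), η.1 ∈ Λ' → z η n ∈ AddSubgroup.closure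
      (FreeAbelianGroup.of '' {g | μ g < toLex (1, toLex (rk η.1, j)) ∧ g ∈ good}) := by
    intro η n j h1
    refine (AddSubgroup.closure_le _).2 ?_ (hz η n)
    rintro g (⟨ρ, hρ, rfl⟩ | ⟨ν, hν, -, rfl⟩)
    · refine AddSubgroup.subset_closure ⟨Gen2.X ρ, ⟨Xlow η ρ j h1 ?_, goodX _⟩, rfl⟩
      rintro η' ⟨h2, n', hn', heq⟩
      have h3 := ((hgo η' h2).2.2 η.1 h1 n' hn').2
      have h4 : restrictAt η' (ℓ η') n' ∈ Qf F η.1 := ⟨η.2, heq ▸ hρ⟩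
      by_contra h5
      refine h3 ?_ h4
      by_cases h6 : η.1 = η'
      · exact Or.inr h6
      · exact Or.inl ((htri _ _ h6).resolve_right h5)
    · have hP : ν.1 ∈ Pf F η.1 := ⟨η.2, hν⟩
      have hν' : ν.1 ∈ Λ' := hcl _ h1 _ hP
      refine AddSubgroup.subset_closure ⟨_, ⟨?_, goodY _ _ hν'⟩, rfl⟩
      by_cases h2 : N ν.1 ≤ n
      · rw [μY0 _ _ hν' h2]
        exact lex_lt (Or.inl one_pos)
      · rw [μY1 _ _ hν' h2]
        exact lex_lt (Or.inr ⟨rfl, Or.inl (hrk ((hgo _ h1).2.1 _ hν' hP))⟩)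
  have hgood : ∀ i, i.1.1 ∈ Λ' → c i • FreeAbelianGroup.of (p i) - rel i ∈
      AddSubgroup.closure (FreeAbelianGroup.of '' {g | μ g < μ (p i) ∧ g ∈ good}) := by
    rintro ⟨η, n⟩ h1
    have h1 : η.1 ∈ Λ' := h1
    have hc : c (η, n) = -1 := by simp only [c, if_pos h1]
    rw [hc]
    have Xm : ∀ m (η' : Fin (k + 1) → ℕ → ↥Sset), E (resMem η m n).1 η' →
        η' ≠ η.1 → r η' η.1 := by
      rintro m η' ⟨h2, n', hn', heq⟩ hne
      obtain ⟨hm, hnn, -, -⟩ := restrictAt_eq heq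
      subst hnn
      refine (htri _ _ hne).resolve_right fun h => ?_
      exact ((hgo η' h2).2.2 η.1 h1 n hn').1 h (heq.symm.trans (by
        show restrictAt η.1 m n = _; rw [hm]))
    by_cases h2 : N η.1 ≤ n
    · have hpe := pA _ _ h1 h2
      have hμ : μ (p (η, n)) = toLex (1, toLex (rk η.1, 0)) := by
        rw [hpe]; exact μXE _ _ ⟨h1, n, h2, rfl⟩
      rw [hμ, hpe]
      have e : (-1 : ℤ) • FreeAbelianGroup.of (Gen2.X (resMem η (ℓ η.1) n)) - rel (η, n) =
          -((n.factorial : ℤ) • FreeAbelianGroup.of (Gen2.Y η (n + 1)))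
          + FreeAbelianGroup.of (Gen2.Y η n) + b η n • z η n
          + ∑ m ∈ Finset.univ.erase (ℓ η.1), FreeAbelianGroup.of (Gen2.X (resMem η m n)) := by
        simp only [rel]
        rw [← Finset.add_sum_erase _ _ (Finset.mem_univ (ℓ η.1))]
        rw [neg_one_zsmul]
        abel
      rw [e]
      refine AddSubgroup.add_mem _ (AddSubgroup.add_mem _ (AddSubgroup.add_mem _
        (AddSubgroup.neg_mem _ (AddSubgroup.zsmul_mem _ ?_ _)) ?_)
        (AddSubgroup.zsmul_mem _ (zlow η n 0 h1) _)) (AddSubgroup.sum_mem _ ?_)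
      · refine AddSubgroup.subset_closure ⟨_, ⟨?_, goodY _ _ h1⟩, rfl⟩
        rw [μY0 _ _ h1 (h2.trans (Nat.le_succ _))]
        exact lex_lt (Or.inl one_pos)
      · refine AddSubgroup.subset_closure ⟨_, ⟨?_, goodY _ _ h1⟩, rfl⟩
        rw [μY0 _ _ h1 h2]
        exact lex_lt (Or.inl one_pos)
      · intro m hm
        refine AddSubgroup.subset_closure ⟨Gen2.X (resMem η m n), ⟨Xlow η _ 0 h1 ?_, goodX _⟩, rfl⟩
        intro η' hE
        refine Xm m η' hE ?_
        rintro rfl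
        obtain ⟨_, n', _, heq⟩ := hE
        exact (Finset.ne_of_mem_erase hm) (restrictAt_eq heq).1
    · have hpe := pB _ _ h1 h2
      have hμ : μ (p (η, n)) = toLex (1, toLex (rk η.1, N η.1 - n)) := by
        rw [hpe]; exact μY1 _ _ h1 h2
      rw [hμ, hpe]
      have e : (-1 : ℤ) • FreeAbelianGroup.of (Gen2.Y η n) - rel (η, n) =
          -((n.factorial : ℤ) • FreeAbelianGroup.of (Gen2.Y η (n + 1)))
          + b η n • z η n
          + ∑ m, FreeAbelianGroup.of (Gen2.X (resMem η m n)) := by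
        simp only [rel]
        rw [neg_one_zsmul]
        abel
      rw [e]
      refine AddSubgroup.add_mem _ (AddSubgroup.add_mem _ 
        (AddSubgroup.neg_mem _ (AddSubgroup.zsmul_mem _ ?_ _))
        (AddSubgroup.zsmul_mem _ (zlow η n _ h1) _)) (AddSubgroup.sum_mem _ ?_)
      · refine AddSubgroup.subset_closure ⟨_, ⟨?_, goodY _ _ h1⟩, rfl⟩
        by_cases h3 : N η.1 ≤ n + 1
        · rw [μY0 _ _ h1 h3]
          exact lex_lt (Or.inl one_pos)
        · rw [μY1 _ _ h1 h3]
          exact lex_lt (Or.inr ⟨rfl, Or.inr ⟨rfl, by omega⟩⟩)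
      · intro m _
        refine AddSubgroup.subset_closure ⟨Gen2.X (resMem η m n), ⟨Xlow η _ _ h1 ?_, goodX _⟩, rfl⟩
        intro η' hE
        refine Xm m η' hE ?_
        rintro rfl
        obtain ⟨_, n', hn', heq⟩ := hE
        have := (restrictAt_eq heq).2.1
        omega
  have hbad : ∀ i, i.1.1 ∉ Λ' → c i • FreeAbelianGroup.of (p i) - rel i ∈
      AddSubgroup.closure (FreeAbelianGroup.of '' {g | μ g < μ (p i)}) := by
    rintro ⟨η, n⟩ h1
    have h1 : η.1 ∉ Λ' := h1
    have hc : c (η, n) = (n.factorial : ℤ) := by simp only [c, if_neg h1]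
    have hpe := pC η n h1
    have hμ : μ (p (η, n)) = toLex (2, toLex (rkF η.1, n + 1)) := by
      rw [hpe]; exact μY2 _ _ h1
    rw [hc, hμ, hpe]
    have e : (n.factorial : ℤ) • FreeAbelianGroup.of (Gen2.Y η (n + 1)) - rel (η, n) =
        FreeAbelianGroup.of (Gen2.Y η n) + b η n • z η n
          + ∑ m, FreeAbelianGroup.of (Gen2.X (resMem η m n)) := by
      simp only [rel]
      abel
    rw [e]
    refine AddSubgroup.add_mem _ (AddSubgroup.add_mem _ ?_ (AddSubgroup.zsmul_mem _ ?_ _))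
      (AddSubgroup.sum_mem _ ?_)
    · refine AddSubgroup.subset_closure ⟨_, ?_, rfl⟩
      rw [Set.mem_ofPred_eq, μY2 _ _ h1]
      exact lex_lt (Or.inr ⟨rfl, Or.inr ⟨rfl, by omega⟩⟩)
    · refine (AddSubgroup.closure_le _).2 ?_ (hz η n)
      rintro g (⟨ρ, hρ, rfl⟩ | ⟨ν, hν, -, rfl⟩)
      · exact AddSubgroup.subset_closure ⟨_, Xle _ _ _, rfl⟩
      · refine AddSubgroup.subset_closure ⟨_, ?_, rfl⟩
        rw [Set.mem_ofPred_eq]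
        by_cases hν' : ν.1 ∈ Λ'
        · by_cases h2 : N ν.1 ≤ n
          · rw [μY0 _ _ hν' h2]
            exact lex_lt (Or.inl two_pos)
          · rw [μY1 _ _ hν' h2]
            exact lex_lt (Or.inl one_lt_two)
        · rw [μY2 _ _ hν']
          exact lex_lt (Or.inr ⟨rfl, Or.inl (hrkF ⟨η.2, hν⟩)⟩)
    · intro m _
      exact AddSubgroup.subset_closure ⟨_, Xle _ _ _, rfl⟩
  refine alg μ p hp c ?_ rel good ?_ ?_ (relSub2 b z) ?_ H hHg
  · intro i
    simp only [c]
    split_ifs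
    · norm_num
    · exact_mod_cast Nat.factorial_ne_zero _
  · intro i
    by_cases h : i.1.1 ∈ Λ'
    · exact AddSubgroup.closure_mono (Set.image_mono fun g hg => hg.1) (hgood i h)
    · exact hbad i h
  · intro i hi
    have h : i.1.1 ∈ Λ' := by
      by_contra h
      have hpe := pC i.1 i.2 h
      exact h (hi i.1 (i.2 + 1) hpe)
    exact ⟨Or.inr (by simp only [c, if_pos h]), hgood i h⟩
  · rw [relSub2]
    congr 1
    ext g
    constructor
    · rintro ⟨η, n, rfl⟩; exact ⟨(η, n), rfl⟩
    · rintro ⟨⟨η, n⟩, rfl⟩; exact ⟨η, n, rfl⟩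

end Sh883

open Sh883 in
/-- Let `x = (Sset, Λ)` be a combinatorial `k`-parameter with `Sset` a
set of ordinals, `F` a regressive function on `x` which is finitary or simple,
`b : Λ × ℕ → ℤ`, and for `η̄ ∈ Λ`, `n ∈ ℕ` let `z_{η̄,n}` be a ℤ-linear combination of
generators `x_{ν̄}` (`ν̄ ∈ F(η̄) ∖ Λ`) and `y_{ν̄,n}` (`ν̄ ∈ F(η̄) ∩ Λ` with
`ν̄↾⟨m,n⟩ ∈ F(η̄)` for all `m ≤ k`).  Then the abelian group presented by the generators
`x_ν, y_{η̄,n}` and the relations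
`n!·y_{η̄,n+1} = y_{η̄,n} + b(η̄,n)·z_{η̄,n} + Σ_{m≤k} x_{η̄↾⟨m,n⟩}` is `ℵ_{k+1}`-free. -/
theorem stmt17 (k : ℕ) (Sset : Set Ordinal.{u}) (Λ : Set (Fin (k + 1) → ℕ → ↥Sset))
    (F : ↥Λ → Set (FullOrRes k Sset)) (hreg : Regressive Λ F)
    (hfs : Finitary F ∨ Simple F)
    (b : ↥Λ → ℕ → ℤ) (z : ↥Λ → ℕ → FreeAbelianGroup (Gen2 k Sset Λ))
    (hz : ∀ (η : ↥Λ) (n : ℕ), z η n ∈ zSpan F η n) :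
    ∀ H : AddSubgroup (FreeAbelianGroup (Gen2 k Sset Λ) ⧸ relSub2 b z),
      #H < Cardinal.aleph (k + 1) → Module.Free ℤ H := by
  intro H hH
  exact main hreg hfs b z hz H hH
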